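/- Let M = (S, A, P, R, H, μ) be a finite MDP with H ≥ 2·ln(8 · (|S|+1)^{4(|S|+1)}). For any state-action pair z ∈ S × A there exists a stationary policy π : S → A such that for every non-stationary deterministic policy π′, Pr[Σ_{h=0}^{⌊H/2⌋−1} 1[(s_h, a_h) = z] ≥ 1] ≥ (1/(512 · (|S|+1)^{12(|S|+1)})) · Pr[Σ_{h=0}^{H−1} 1[(s′_h, a′_h) = z] ≥ 1], where (s_0, a_0), …, (s_{H−1}, a_{H−1}), s_H is a random trajectory induced by executing π in M and (s′_0, a′_0), …, (s′_{H−1}, a′_{H−1}), s′_H is a random trajectory induced by executing π′ in M. -/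

import Mathlib

open Finset

/-- Extend a trajectory `(s_0, …, s_H)` to a function `ℕ → S` (constant after time `H`). -/
def extT {S : Type} (H : ℕ) (T : Fin (H + 1) → S) : ℕ → S :=
  fun n => T ⟨min n H, Nat.lt_succ_of_le (Nat.min_le_right n H)⟩

/-- Probability of the trajectory with state sequence `f` under the (possibly non-stationary)
deterministic policy `π`: `p(T, M, π) = μ(s_0) · ∏_{h<H} P(s_{h+1} ∣ s_h, π_h(s_h))`. -/
noncomputable def trajP {S A : Type} (μ : S → ℝ) (P : S → A → S → ℝ)
    (π : ℕ → S → A) (H : ℕ) (f : ℕ → S) : ℝ :=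
  μ (f 0) * ∏ h ∈ Finset.range H, P (f h) (π h (f h)) (f (h + 1))

/-- Number of times the state-action pair `z` is visited during the first `K` steps of the
trajectory with state sequence `f`, when actions are chosen by the policy `π`. -/
def nVisits {S A : Type} [DecidableEq S] [DecidableEq A] (π : ℕ → S → A) (K : ℕ)
    (z : S × A) (f : ℕ → S) : ℕ :=
  ∑ h ∈ Finset.range K, if (f h, π h (f h)) = z then 1 else 0


/-!
Let `V s` be the optimal discounted value, over all policies and all horizons, of reaching `z` from
`s`. Choosing a near-optimal action in the Bellman equation at every state gives a stationary policy
for which `V` is, up to a slightly weaker discount `δ`, a subsolution: `V` is at most the discounted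
expected number of visits to the state of `z` by the chain that is killed there.

It remains to replace the discounted number of visits by the number of visits within `H / 2` steps.
Among all starting states, `s` itself has the most expected visits to `s`, so the visits to `s`
during the first `m` steps make up at least a fraction `1 - δ ^ m` of its discounted visits.
Splitting paths at their last visit to `s` reduces the comparison to the chain that avoids `s`;
treating the states one by one, `|S| * m` steps lose a factor `(1 - δ ^ m) ^ |S|` only. A half-life
`m` of about `H / (2 * |S|)` steps keeps both this factor and the discount over `H` steps
exponential in `|S|`, independently of `H`.
-/

section OccupationMatrix

open Filter Matrix Topology

variable {R S : Type*}

theorem updateCol_zero_nonneg [DecidableEq S] [Zero R] [Preorder R] {M : Matrix S S R}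
    (hM : ∀ i j, 0 ≤ M i j) (s i j : S) : 0 ≤ M.updateCol s 0 i j := by
  rw [updateCol_apply]
  split_ifs
  exacts [le_rfl, hM i j]

theorem updateCol_zero_apply_eq_zero [DecidableEq S] [Zero R] {M : Matrix S S R} {D : Finset S}
    {i : S} (hM : ∀ j ∉ D, M i j = 0) (s : S) : ∀ j ∉ D.erase s, M.updateCol s 0 i j = 0 := by
  intro j hj
  rw [updateCol_apply]
  split_ifs with hjs
  exacts [rfl, hM j fun hjD => hj (mem_erase.2 ⟨hjs, hjD⟩)]

variable [Fintype S] [DecidableEq S]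

/-- The monoid of row-substochastic matrices: nonnegative entries and row sums at most one. They
are the transition matrices of Markov chains that may be killed at each step. -/
def rowSubstochastic (R S : Type*) [Fintype S] [DecidableEq S] [Semiring R] [PartialOrder R]
    [IsOrderedRing R] : Submonoid (Matrix S S R) where
  carrier := {M | (∀ i j, 0 ≤ M i j) ∧ ∀ i, ∑ j, M i j ≤ 1}
  one_mem' := (mem_rowStochastic_iff_sum.1 (one_mem _)).imp_right fun h i => (h i).le
  mul_mem' {M N} hM hN := by
    refine ⟨fun i j => sum_nonneg fun k _ => mul_nonneg (hM.1 i k) (hN.1 k j), fun i => ?_⟩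
    calc ∑ j, (M * N) i j = ∑ k, M i k * ∑ j, N k j := by
          simp only [mul_apply, mul_sum]
          exact sum_comm
      _ ≤ ∑ k, M i k := sum_le_sum fun k _ => mul_le_of_le_one_right (hM.1 i k) (hN.2 k)
      _ ≤ 1 := hM.2 i

/-- The truncated potential matrix of `M`: the entry at `(s, t)` is the expected number of visits
to `t` during the first `N` steps of the chain with transition matrix `M` started at `s`. -/
def occupation [Semiring R] (M : Matrix S S R) (N : ℕ) : Matrix S S R :=
  ∑ j ∈ range N, M ^ j

@[simp]
theorem occupation_zero [Semiring R] (M : Matrix S S R) : occupation M 0 = 0 :=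
  sum_range_zero _

theorem occupation_succ [Semiring R] (M : Matrix S S R) (N : ℕ) :
    occupation M (N + 1) = 1 + M * occupation M N := by
  rw [occupation, geom_sum_succ, add_comm, occupation]

theorem occupation_succ' [Semiring R] (M : Matrix S S R) (N : ℕ) :
    occupation M (N + 1) = 1 + occupation M N * M := by
  simp only [occupation, sum_range_succ', sum_mul, pow_succ, pow_zero, add_comm]

theorem occupation_add [Semiring R] (M : Matrix S S R) (m N : ℕ) :
    occupation M (m + N) = occupation M m + M ^ m * occupation M N := by
  simp only [occupation, sum_range_add, mul_sum, pow_add]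

theorem occupation_apply [Semiring R] (M : Matrix S S R) (N : ℕ) (s t : S) :
    occupation M N s t = ∑ j ∈ range N, (M ^ j) s t :=
  Matrix.sum_apply s t _ _

theorem occupation_succ_apply_eq_updateCol [Semiring R] (M : Matrix S S R) (s t : S) (N : ℕ) :
    occupation M (N + 1) s t = (occupation M N * M.updateCol s 0) s t +
      occupation M (N + 1) s s * (1 : Matrix S S R) s t := by
  obtain rfl | hst := eq_or_ne s t
  · simp [mul_apply]
  · simp [occupation_succ', mul_apply, hst, hst.symm]

theorem occupation_eq_sum_updateCol [Semiring R] (M : Matrix S S R) (s t : S) (N : ℕ) :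
    occupation M N s t =
      ∑ i ∈ range N, (M ^ i) s s * occupation (M.updateCol s 0) (N - i) s t := by
  induction N generalizing t with
  | zero => simp
  | succ N ih =>
    have hstep : (occupation M N * M.updateCol s 0) s t = ∑ i ∈ range (N + 1),
        (M ^ i) s s * (occupation (M.updateCol s 0) (N - i) * M.updateCol s 0) s t := by
      simp only [sum_range_succ _ N, mul_apply, ih, sum_mul, mul_sum, mul_assoc, Nat.sub_self,
        occupation_zero, Matrix.zero_apply, zero_mul, mul_zero, add_zero, sum_const_zero]
      exact sum_comm
    rw [occupation_succ_apply_eq_updateCol, hstep, occupation_apply M (N + 1), sum_mul,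
      ← sum_add_distrib]
    refine sum_congr rfl fun i hi => ?_
    rw [Nat.succ_sub (mem_range_succ_iff.1 hi), occupation_succ', Matrix.add_apply, mul_add,
      add_comm]

variable [CommRing R] [PartialOrder R] [IsOrderedRing R] {M : Matrix S S R} {γ : R}

theorem updateCol_zero_mem_rowSubstochastic (hM : M ∈ rowSubstochastic R S) (s : S) :
    M.updateCol s 0 ∈ rowSubstochastic R S := by
  refine ⟨updateCol_zero_nonneg hM.1 s, fun i => (sum_le_sum fun j _ => ?_).trans (hM.2 i)⟩
  rw [updateCol_apply]
  split_ifs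
  exacts [hM.1 i j, le_rfl]

theorem smul_mem_rowSubstochastic (hγ0 : 0 ≤ γ) (hγ1 : γ ≤ 1) (hM : M ∈ rowSubstochastic R S) :
    γ • M ∈ rowSubstochastic R S := by
  refine ⟨fun i j => mul_nonneg hγ0 (hM.1 i j), fun i => ?_⟩
  simp only [Matrix.smul_apply, smul_eq_mul, ← mul_sum]
  exact mul_le_one₀ hγ1 (sum_nonneg fun j _ => hM.1 i j) (hM.2 i)

theorem sum_mul_le_of_mem_rowSubstochastic (hM : M ∈ rowSubstochastic R S) {x : S → R} {c : R}
    (hc : 0 ≤ c) (hx : ∀ j, x j ≤ c) (i : S) : ∑ j, M i j * x j ≤ c :=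
  calc ∑ j, M i j * x j ≤ ∑ j, M i j * c :=
        sum_le_sum fun j _ => mul_le_mul_of_nonneg_left (hx j) (hM.1 i j)
    _ = (∑ j, M i j) * c := by rw [sum_mul]
    _ ≤ c := mul_le_of_le_one_left hc (hM.2 i)

theorem occupation_nonneg (hM : ∀ i j, 0 ≤ M i j) (N : ℕ) (s t : S) : 0 ≤ occupation M N s t := by
  rw [occupation_apply]
  exact sum_nonneg fun j _ => M.pow_apply_nonneg hM j s t

theorem occupation_mono (hM : ∀ i j, 0 ≤ M i j) {N N' : ℕ} (h : N ≤ N') (s t : S) :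
    occupation M N s t ≤ occupation M N' s t := by
  simp only [occupation_apply]
  exact sum_le_sum_of_subset_of_nonneg (range_mono h) fun j _ _ => M.pow_apply_nonneg hM j s t

theorem occupation_smul_le (hγ0 : 0 ≤ γ) (hγ1 : γ ≤ 1) (hM : ∀ i j, 0 ≤ M i j) (N : ℕ) (s t : S) :
    occupation (γ • M) N s t ≤ occupation M N s t := by
  simp only [occupation_apply, smul_pow, Matrix.smul_apply, smul_eq_mul]
  exact sum_le_sum fun j _ =>
    mul_le_of_le_one_left (M.pow_apply_nonneg hM j s t) (pow_le_one₀ hγ0 hγ1)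

theorem occupation_le_diag (hM : M ∈ rowSubstochastic R S) (N : ℕ) (s t : S) :
    occupation M N s t ≤ occupation M N t t := by
  induction N generalizing s with
  | zero => simp [occupation]
  | succ N ih =>
    obtain rfl | hst := eq_or_ne s t
    · exact le_rfl
    · calc occupation M (N + 1) s t = ∑ i, M s i * occupation M N i t := by
            rw [occupation_succ, Matrix.add_apply, one_apply_ne hst, zero_add,
              mul_apply]
        _ ≤ occupation M N t t :=
            sum_mul_le_of_mem_rowSubstochastic hM (occupation_nonneg hM.1 N t t) ih s
        _ ≤ occupation M (N + 1) t t := occupation_mono hM.1 N.le_succ t t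

theorem one_sub_pow_mul_occupation_smul_diag_le (hγ0 : 0 ≤ γ) (hγ1 : γ ≤ 1)
    (hM : M ∈ rowSubstochastic R S) (m N : ℕ) (s : S) :
    (1 - γ ^ m) * occupation (γ • M) N s s ≤ occupation M m s s := by
  have hγM := smul_mem_rowSubstochastic hγ0 hγ1 hM
  have hreturn : (M ^ m * occupation (γ • M) N) s s ≤ occupation (γ • M) N s s :=
    sum_mul_le_of_mem_rowSubstochastic (pow_mem hM m) (occupation_nonneg hγM.1 N s s)
      (fun i => occupation_le_diag hγM N i s) s
  rw [sub_mul, one_mul, sub_le_iff_le_add]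
  calc occupation (γ • M) N s s ≤ occupation (γ • M) (m + N) s s :=
        occupation_mono hγM.1 (N.le_add_left m) s s
    _ = occupation (γ • M) m s s + γ ^ m * (M ^ m * occupation (γ • M) N) s s := by
        rw [occupation_add, smul_pow, smul_mul_assoc, Matrix.add_apply, Matrix.smul_apply,
          smul_eq_mul]
    _ ≤ occupation M m s s + γ ^ m * occupation (γ • M) N s s :=
        add_le_add (occupation_smul_le hγ0 hγ1 hM.1 m s s)
          (mul_le_mul_of_nonneg_left hreturn (pow_nonneg hγ0 m))

theorem occupation_le_mul_updateCol (hM : ∀ i j, 0 ≤ M i j) (s t : S) (N : ℕ) :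
    occupation M N s t ≤ occupation M N s s * occupation (M.updateCol s 0) N s t := by
  rw [occupation_eq_sum_updateCol, occupation_apply M N s s, sum_mul]
  exact sum_le_sum fun i _ => mul_le_mul_of_nonneg_left
    (occupation_mono (updateCol_zero_nonneg hM s) (N.sub_le i) s t) (M.pow_apply_nonneg hM i s s)

theorem mul_updateCol_le_occupation (hM : ∀ i j, 0 ≤ M i j) (s t : S) (m L : ℕ) :
    occupation M m s s * occupation (M.updateCol s 0) (L + 1) s t ≤ occupation M (m + L) s t := by
  have hM' := updateCol_zero_nonneg hM s
  rw [occupation_eq_sum_updateCol M s t, occupation_apply, sum_mul]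
  calc ∑ i ∈ range m, (M ^ i) s s * occupation (M.updateCol s 0) (L + 1) s t
      ≤ ∑ i ∈ range m, (M ^ i) s s * occupation (M.updateCol s 0) (m + L - i) s t :=
        sum_le_sum fun i hi => mul_le_mul_of_nonneg_left
          (occupation_mono hM' (by have := mem_range.1 hi; omega) s t)
          (M.pow_apply_nonneg hM i s s)
    _ ≤ ∑ i ∈ range (m + L), (M ^ i) s s * occupation (M.updateCol s 0) (m + L - i) s t :=
        sum_le_sum_of_subset_of_nonneg (range_mono (m.le_add_right L)) fun i _ _ =>
          mul_nonneg (M.pow_apply_nonneg hM i s s) (occupation_nonneg hM' _ s t)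

theorem occupation_smul_le_of_updateCol (hγ0 : 0 ≤ γ) (hγ1 : γ ≤ 1)
    (hM : M ∈ rowSubstochastic R S) {c : R} (hc : 0 ≤ c) {m L N : ℕ} {s t : S}
    (h : c * occupation (γ • M.updateCol s 0) N s t ≤ occupation (M.updateCol s 0) (L + 1) s t) :
    (1 - γ ^ m) * c * occupation (γ • M) N s t ≤ occupation M (m + L) s t := by
  have hq : 0 ≤ 1 - γ ^ m := sub_nonneg.2 (pow_le_one₀ hγ0 hγ1)
  have hγM := (smul_mem_rowSubstochastic hγ0 hγ1 hM).1
  have hsmul : (γ • M).updateCol s 0 = γ • M.updateCol s 0 := by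
    ext i j
    by_cases hj : j = s <;> simp [hj]
  calc (1 - γ ^ m) * c * occupation (γ • M) N s t
      ≤ (1 - γ ^ m) * c *
          (occupation (γ • M) N s s * occupation (γ • M.updateCol s 0) N s t) := by
        rw [← hsmul]
        exact mul_le_mul_of_nonneg_left (occupation_le_mul_updateCol hγM s t N) (mul_nonneg hq hc)
    _ = (1 - γ ^ m) * occupation (γ • M) N s s *
          (c * occupation (γ • M.updateCol s 0) N s t) := by ring
    _ ≤ occupation M m s s * occupation (M.updateCol s 0) (L + 1) s t :=
        mul_le_mul (one_sub_pow_mul_occupation_smul_diag_le hγ0 hγ1 hM m N s) h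
          (mul_nonneg hc (hsmul ▸ occupation_nonneg (updateCol_zero_nonneg hγM s) N s t))
          (occupation_nonneg hM.1 m s s)
    _ ≤ occupation M (m + L) s t := mul_updateCol_le_occupation hM.1 s t m L

theorem occupation_smul_succ_le_of_forall_mem (hγ0 : 0 ≤ γ) (hγ1 : γ ≤ 1)
    (hM : M ∈ rowSubstochastic R S) {D : Finset S} (hMD : ∀ i, ∀ j ∉ D, M i j = 0) {c : R}
    (hc0 : 0 ≤ c) (hc1 : c ≤ 1) {N L : ℕ} {t : S}
    (h : ∀ i ∈ D, c * occupation (γ • M) N i t ≤ occupation M L i t) (s : S) :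
    c * occupation (γ • M) (N + 1) s t ≤ occupation M (L + 1) s t := by
  have hγM := (smul_mem_rowSubstochastic hγ0 hγ1 hM).1
  have hstep : ∀ i, M s i * (γ * (c * occupation (γ • M) N i t)) ≤ M s i * occupation M L i t := by
    intro i
    by_cases hi : i ∈ D
    · exact mul_le_mul_of_nonneg_left ((mul_le_of_le_one_left
        (mul_nonneg hc0 (occupation_nonneg hγM N i t)) hγ1).trans (h i hi)) (hM.1 s i)
    · simp [hMD s i hi]
  calc c * occupation (γ • M) (N + 1) s t
      = c * (1 : Matrix S S R) s t + ∑ i, M s i * (γ * (c * occupation (γ • M) N i t)) := by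
        rw [occupation_succ, Matrix.add_apply, mul_apply, mul_add, mul_sum]
        congr 1
        refine sum_congr rfl fun i _ => ?_
        rw [Matrix.smul_apply, smul_eq_mul]
        ring
    _ ≤ (1 : Matrix S S R) s t + ∑ i, M s i * occupation M L i t :=
        add_le_add (mul_le_of_le_one_left ((one_mem (rowSubstochastic R S)).1 s t) hc1)
          (sum_le_sum fun i _ => hstep i)
    _ = occupation M (L + 1) s t := by rw [occupation_succ, Matrix.add_apply, mul_apply]

-- Forbid the states of `D` one at a time: each removal splits paths at the removed state and costs
-- a factor `1 - γ ^ m` and `m` further steps.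
theorem occupation_smul_le_of_forall_notMem (hγ0 : 0 ≤ γ) (hγ1 : γ ≤ 1) (m : ℕ) (D : Finset S)
    (hM : M ∈ rowSubstochastic R S) (hMD : ∀ i, ∀ j ∉ D, M i j = 0) (N : ℕ) (s t : S) :
    (1 - γ ^ m) ^ #D * occupation (γ • M) N s t ≤ occupation M (#D * m + 1) s t := by
  induction D using Finset.strongInduction generalizing M N s t with
  | H D ih =>
    have hq0 : 0 ≤ 1 - γ ^ m := sub_nonneg.2 (pow_le_one₀ hγ0 hγ1)
    have hq1 : 1 - γ ^ m ≤ 1 := sub_le_self 1 (pow_nonneg hγ0 m)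
    have hγM := (smul_mem_rowSubstochastic hγ0 hγ1 hM).1
    have hmem : ∀ i ∈ D,
        (1 - γ ^ m) ^ #D * occupation (γ • M) N i t ≤ occupation M (#D * m) i t := by
      intro i hi
      rw [← card_erase_add_one hi, pow_succ', add_one_mul, add_comm _ m]
      exact occupation_smul_le_of_updateCol hγ0 hγ1 hM (pow_nonneg hq0 _)
        (ih (D.erase i) (erase_ssubset hi) (updateCol_zero_mem_rowSubstochastic hM i)
          (fun k => updateCol_zero_apply_eq_zero (hMD k) i) N i t)
    calc (1 - γ ^ m) ^ #D * occupation (γ • M) N s t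
        ≤ (1 - γ ^ m) ^ #D * occupation (γ • M) (N + 1) s t :=
          mul_le_mul_of_nonneg_left (occupation_mono hγM N.le_succ s t) (pow_nonneg hq0 _)
      _ ≤ occupation M (#D * m + 1) s t :=
          occupation_smul_succ_le_of_forall_mem hγ0 hγ1 hM hMD (pow_nonneg hq0 _)
            (pow_le_one₀ hq0 hq1) hmem s

theorem one_sub_pow_mul_occupation_smul_le (hγ0 : 0 ≤ γ) (hγ1 : γ ≤ 1) (m : ℕ)
    (hM : M ∈ rowSubstochastic R S) (N : ℕ) (s t : S) :
    (1 - γ ^ m) ^ Fintype.card S * occupation (γ • M) N s t ≤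
      occupation M (Fintype.card S * m) s t := by
  have hq : 0 ≤ 1 - γ ^ m := sub_nonneg.2 (pow_le_one₀ hγ0 hγ1)
  have hcard : Fintype.card S = #(univ.erase s) + 1 := (card_erase_add_one (mem_univ s)).symm
  rw [hcard, pow_succ', add_one_mul, add_comm _ m]
  exact occupation_smul_le_of_updateCol hγ0 hγ1 hM (pow_nonneg hq _)
    (occupation_smul_le_of_forall_notMem hγ0 hγ1 m _ (updateCol_zero_mem_rowSubstochastic hM s)
      (fun _ => updateCol_zero_apply_eq_zero (by simp) s) N s t)

theorem le_occupation_mulVec_add {V b : S → R} (hM : ∀ i j, 0 ≤ M i j) (hV : V ≤ b + M *ᵥ V)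
    (N : ℕ) : V ≤ occupation M N *ᵥ b + M ^ N *ᵥ V := by
  induction N with
  | zero => simp [occupation]
  | succ N ih =>
    have hpow : M ^ N *ᵥ V ≤ M ^ N *ᵥ (b + M *ᵥ V) := fun s =>
      sum_le_sum fun i _ => mul_le_mul_of_nonneg_left (hV i) (M.pow_apply_nonneg hM N s i)
    calc V ≤ occupation M N *ᵥ b + M ^ N *ᵥ V := ih
      _ ≤ occupation M N *ᵥ b + M ^ N *ᵥ (b + M *ᵥ V) := add_le_add le_rfl hpow
      _ = occupation M (N + 1) *ᵥ b + M ^ (N + 1) *ᵥ V := by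
        rw [mulVec_add, mulVec_mulVec, ← pow_succ, ← add_assoc,
          ← add_mulVec, occupation, occupation, sum_range_succ]

theorem smul_pow_mulVec_le (hγ0 : 0 ≤ γ) (hM : M ∈ rowSubstochastic R S) {V : S → R} {C : R}
    (hC : 0 ≤ C) (hV : ∀ i, V i ≤ C) (N : ℕ) (s : S) : ((γ • M) ^ N *ᵥ V) s ≤ γ ^ N * C := by
  rw [smul_pow, smul_mulVec, Pi.smul_apply, smul_eq_mul]
  exact mul_le_mul_of_nonneg_left
    (sum_mul_le_of_mem_rowSubstochastic (pow_mem hM N) hC hV s) (pow_nonneg hγ0 N)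

theorem one_sub_pow_mul_occupation_smul_mulVec_le (hγ0 : 0 ≤ γ) (hγ1 : γ ≤ 1) (m : ℕ)
    (hM : M ∈ rowSubstochastic R S) {b : S → R} (hb : 0 ≤ b) (N : ℕ) (s : S) :
    (1 - γ ^ m) ^ Fintype.card S * (occupation (γ • M) N *ᵥ b) s ≤
      (occupation M (Fintype.card S * m) *ᵥ b) s := by
  simp only [mulVec, dotProduct, mul_sum, ← mul_assoc]
  exact sum_le_sum fun t _ => mul_le_mul_of_nonneg_right
    (one_sub_pow_mul_occupation_smul_le hγ0 hγ1 m hM N s t) (hb t)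

theorem one_sub_pow_mul_le_occupation_mulVec {M : Matrix S S ℝ} (hM : M ∈ rowSubstochastic ℝ S)
    {γ : ℝ} (hγ0 : 0 ≤ γ) (hγ1 : γ < 1) (m : ℕ) {V b : S → ℝ} (hb : 0 ≤ b)
    (hV : V ≤ b + (γ • M) *ᵥ V) (s : S) :
    (1 - γ ^ m) ^ Fintype.card S * V s ≤ (occupation M (Fintype.card S * m) *ᵥ b) s := by
  set c := (1 - γ ^ m) ^ Fintype.card S
  set B := (occupation M (Fintype.card S * m) *ᵥ b) s
  have hc : 0 ≤ c := pow_nonneg (sub_nonneg.2 (pow_le_one₀ hγ0 hγ1.le)) _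
  have hγM := (smul_mem_rowSubstochastic hγ0 hγ1.le hM).1
  have hbound : ∀ i, V i ≤ ∑ j, |V j| := fun i =>
    (le_abs_self _).trans (single_le_sum (fun j _ => abs_nonneg (V j)) (mem_univ i))
  have htrunc : ∀ N, c * V s ≤ B + c * (γ ^ N * ∑ j, |V j|) := fun N =>
    calc c * V s ≤ c * ((occupation (γ • M) N *ᵥ b) s + ((γ • M) ^ N *ᵥ V) s) :=
          mul_le_mul_of_nonneg_left (le_occupation_mulVec_add hγM hV N s) hc
      _ = c * (occupation (γ • M) N *ᵥ b) s + c * ((γ • M) ^ N *ᵥ V) s := mul_add _ _ _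
      _ ≤ B + c * (γ ^ N * ∑ j, |V j|) :=
          add_le_add (one_sub_pow_mul_occupation_smul_mulVec_le hγ0 hγ1.le m hM hb N s)
            (mul_le_mul_of_nonneg_left
              (smul_pow_mulVec_le hγ0 hM (sum_nonneg fun j _ => abs_nonneg (V j)) hbound N s) hc)
  have hlim : Tendsto (fun N : ℕ => B + c * (γ ^ N * ∑ j, |V j|)) atTop (𝓝 B) := by
    have hpow := (tendsto_pow_atTop_nhds_zero_of_lt_one hγ0 hγ1).mul_const (∑ j, |V j|)
    simpa using (hpow.const_mul c).const_add B
  exact ge_of_tendsto' hlim htrunc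

end OccupationMatrix

section Trajectory

variable {S A : Type}

theorem extT_cons_zero (H : ℕ) (s : S) (T : Fin (H + 1) → S) :
    extT (H + 1) (Fin.cons s T : Fin (H + 2) → S) 0 = s := by
  simp [extT]

theorem extT_cons_succ (H : ℕ) (s : S) (T : Fin (H + 1) → S) (h : ℕ) :
    extT (H + 1) (Fin.cons s T : Fin (H + 2) → S) (h + 1) = extT H T h := by
  have hmin : (⟨min (h + 1) (H + 1), Nat.lt_succ_of_le (Nat.min_le_right _ _)⟩ : Fin (H + 2)) =
      Fin.succ ⟨min h H, Nat.lt_succ_of_le (Nat.min_le_right _ _)⟩ := by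
    ext
    simp
  rw [extT, hmin, Fin.cons_succ, extT]

theorem trajP_nonneg {μ : S → ℝ} {P : S → A → S → ℝ} (hμ : ∀ s, 0 ≤ μ s)
    (hP : ∀ s a s', 0 ≤ P s a s') (π : ℕ → S → A) (H : ℕ) (f : ℕ → S) : 0 ≤ trajP μ P π H f :=
  mul_nonneg (hμ _) (prod_nonneg fun _ _ => hP _ _ _)

theorem trajP_cons (μ : S → ℝ) (P : S → A → S → ℝ) (π : ℕ → S → A) (H : ℕ) (s : S)
    (T : Fin (H + 1) → S) :
    trajP μ P π (H + 1) (extT (H + 1) (Fin.cons s T : Fin (H + 2) → S)) =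
      μ s * trajP (P s (π 0 s)) P (fun h => π (h + 1)) H (extT H T) := by
  simp only [trajP, prod_range_succ', extT_cons_succ, extT_cons_zero]
  ring

theorem nVisits_cons [DecidableEq S] [DecidableEq A] (π : ℕ → S → A) (z : S × A) (H K : ℕ) (s : S)
    (T : Fin (H + 1) → S) :
    nVisits π (K + 1) z (extT (H + 1) (Fin.cons s T : Fin (H + 2) → S)) =
      nVisits (fun h => π (h + 1)) K z (extT H T) + if (s, π 0 s) = z then 1 else 0 := by
  simp only [nVisits, sum_range_succ', extT_cons_succ, extT_cons_zero]

theorem sum_pi_fin_succ {α M : Type*} [Fintype α] [AddCommMonoid M] (n : ℕ)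
    (f : (Fin (n + 1) → α) → M) :
    ∑ T, f T = ∑ a, ∑ T : Fin n → α, f (Fin.cons a T) := by
  rw [← (Fin.consEquiv fun _ => α).sum_comp, Fintype.sum_prod_type]
  rfl

variable [Fintype S] {P : S → A → S → ℝ}

theorem sum_trajP (μ : S → ℝ) (hP : ∀ s a, ∑ s', P s a s' = 1) (π : ℕ → S → A) (H : ℕ) :
    ∑ T : Fin (H + 1) → S, trajP μ P π H (extT H T) = ∑ s, μ s := by
  induction H generalizing μ π with
  | zero => simp [sum_pi_fin_succ, trajP, extT]
  | succ H ih => simp only [sum_pi_fin_succ (H + 1), trajP_cons, ← mul_sum, ih, hP, mul_one]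

theorem sum_trajP_of_one_le_nVisits_nonneg [DecidableEq S] [DecidableEq A] {μ : S → ℝ}
    (hμ : ∀ s, 0 ≤ μ s) (hP : ∀ s a s', 0 ≤ P s a s') (z : S × A) (π : ℕ → S → A) (H K : ℕ) :
    0 ≤ ∑ T : Fin (H + 1) → S,
      if 1 ≤ nVisits π K z (extT H T) then trajP μ P π H (extT H T) else 0 :=
  sum_nonneg fun _ _ => ite_nonneg (trajP_nonneg hμ hP _ _ _) le_rfl

end Trajectory

section HittingProbability

open scoped Matrix

variable {S A : Type} [Fintype S] [DecidableEq S] {P : S → A → S → ℝ}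

/-- The transition matrix of the chain that follows the stationary policy `π` and is killed when it
leaves the state `t`. -/
def killedMatrix (P : S → A → S → ℝ) (π : S → A) (t : S) : Matrix S S ℝ :=
  (Matrix.of fun s => P s (π s)).updateRow t 0

theorem killedMatrix_mem_rowSubstochastic (hP : ∀ s a, P s a ∈ stdSimplex ℝ S) (π : S → A) (t : S) :
    killedMatrix P π t ∈ rowSubstochastic ℝ S := by
  suffices h : ∀ i, (∀ j, 0 ≤ killedMatrix P π t i j) ∧ ∑ j, killedMatrix P π t i j ≤ 1 from
    ⟨fun i => (h i).1, fun i => (h i).2⟩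
  intro i
  obtain rfl | hi := eq_or_ne i t
  · simp [killedMatrix]
  · simpa [killedMatrix, hi] using ⟨(hP i (π i)).1, (hP i (π i)).2.le⟩

variable [DecidableEq A]

/-- The probability that the state-action pair `z` is visited during the first `k` steps when the
policy `π` is executed from the state `s`. -/
noncomputable def hitProb (P : S → A → S → ℝ) (z : S × A) : ℕ → (ℕ → S → A) → S → ℝ
  | 0, _, _ => 0
  | k + 1, π, s =>
    if (s, π 0 s) = z then 1 else ∑ s', P s (π 0 s) s' * hitProb P z k (fun h => π (h + 1)) s'

/-- The optimal discounted value of reaching `z` from `s`, where a policy that is run for `k` steps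
is discounted by `γ ^ k`. -/
noncomputable def reachValue (P : S → A → S → ℝ) (z : S × A) (γ : ℝ) (s : S) : ℝ :=
  ⨆ q : ℕ × (ℕ → S → A), γ ^ q.1 * hitProb P z q.1 q.2 s

theorem sum_trajP_of_one_le_nVisits (μ : S → ℝ) (hP : ∀ s a, ∑ s', P s a s' = 1) (z : S × A)
    (π : ℕ → S → A) {H K : ℕ} (hK : K ≤ H) :
    (∑ T : Fin (H + 1) → S,
      if 1 ≤ nVisits π K z (extT H T) then trajP μ P π H (extT H T) else 0) =
      ∑ s, μ s * hitProb P z K π s := by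
  induction H generalizing μ π K with
  | zero =>
    obtain rfl := Nat.le_zero.1 hK
    simp [nVisits, hitProb]
  | succ H ih =>
    cases K with
    | zero => simp [nVisits, hitProb]
    | succ K =>
      rw [sum_pi_fin_succ]
      refine sum_congr rfl fun s _ => ?_
      simp only [trajP_cons, nVisits_cons, hitProb]
      split_ifs with hz
      · simp only [Nat.le_add_left, if_true, ← mul_sum, sum_trajP _ hP, hP]
      · simp only [add_zero, ← ih _ _ (Nat.le_of_succ_le_succ hK), mul_sum, mul_ite, mul_zero]

theorem hitProb_nonneg (hP : ∀ s a s', 0 ≤ P s a s') (z : S × A) (k : ℕ) (π : ℕ → S → A) (s : S) :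
    0 ≤ hitProb P z k π s := by
  induction k generalizing π s with
  | zero => exact le_rfl
  | succ k ih =>
    rw [hitProb]
    split_ifs
    exacts [zero_le_one, sum_nonneg fun s' _ => mul_nonneg (hP _ _ _) (ih _ _)]

theorem hitProb_le_one (hP : ∀ s a, P s a ∈ stdSimplex ℝ S) (z : S × A) (k : ℕ)
    (π : ℕ → S → A) (s : S) : hitProb P z k π s ≤ 1 := by
  induction k generalizing π s with
  | zero => exact zero_le_one
  | succ k ih =>
    rw [hitProb]
    split_ifs
    · exact le_rfl
    · calc ∑ s', P s (π 0 s) s' * hitProb P z k (fun h => π (h + 1)) s'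
          ≤ ∑ s', P s (π 0 s) s' :=
            sum_le_sum fun s' _ => mul_le_of_le_one_right ((hP _ _).1 s') (ih _ _)
        _ = 1 := (hP _ _).2

theorem hitProb_mono (hP : ∀ s a s', 0 ≤ P s a s') (z : S × A) (π : ℕ → S → A) (s : S) :
    Monotone fun k => hitProb P z k π s := by
  refine monotone_nat_of_le_succ fun k => ?_
  induction k generalizing π s with
  | zero => exact hitProb_nonneg hP z 1 π s
  | succ k ih =>
    rw [hitProb, hitProb]
    split_ifs
    · exact le_rfl
    · exact sum_le_sum fun s' _ => mul_le_mul_of_nonneg_left (ih _ _) (hP _ _ _)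

theorem hitProb_stationary (z : S × A) {π : S → A} (hπ : π z.1 = z.2) (k : ℕ) (s : S) :
    hitProb P z k (fun _ => π) s = occupation (killedMatrix P π z.1) k s z.1 := by
  induction k generalizing s with
  | zero => simp [hitProb]
  | succ k ih =>
    rw [hitProb, occupation_succ]
    obtain rfl | hs := eq_or_ne s z.1
    · simp [hπ, killedMatrix, Matrix.mul_apply]
    · have hz : (s, π s) ≠ z := fun h => hs (congrArg Prod.fst h)
      simp [hz, hs, ih, killedMatrix, Matrix.mul_apply]

theorem pow_mul_hitProb_le_one (hP : ∀ s a, P s a ∈ stdSimplex ℝ S) (z : S × A) {γ : ℝ}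
    (hγ0 : 0 ≤ γ) (hγ1 : γ ≤ 1) (s : S) (k : ℕ) (π : ℕ → S → A) :
    γ ^ k * hitProb P z k π s ≤ 1 :=
  mul_le_one₀ (pow_le_one₀ hγ0 hγ1) (hitProb_nonneg (fun s a => (hP s a).1) z k π s)
    (hitProb_le_one hP z k π s)

theorem pow_mul_hitProb_le_reachValue (hP : ∀ s a, P s a ∈ stdSimplex ℝ S) (z : S × A) {γ : ℝ}
    (hγ0 : 0 ≤ γ) (hγ1 : γ ≤ 1) (s : S) (k : ℕ) (π : ℕ → S → A) :
    γ ^ k * hitProb P z k π s ≤ reachValue P z γ s := by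
  have hbdd : BddAbove (Set.range fun q : ℕ × (ℕ → S → A) => γ ^ q.1 * hitProb P z q.1 q.2 s) :=
    ⟨1, Set.forall_mem_range.2 fun q => pow_mul_hitProb_le_one hP z hγ0 hγ1 s q.1 q.2⟩
  exact le_ciSup hbdd (k, π)

theorem reachValue_nonneg (hP : ∀ s a, P s a ∈ stdSimplex ℝ S) (z : S × A) {γ : ℝ}
    (hγ0 : 0 ≤ γ) (hγ1 : γ ≤ 1) (s : S) : 0 ≤ reachValue P z γ s := by
  simpa [hitProb] using pow_mul_hitProb_le_reachValue hP z hγ0 hγ1 s 0 fun _ _ => z.2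

theorem reachValue_le_one (hP : ∀ s a, P s a ∈ stdSimplex ℝ S) (z : S × A) {γ : ℝ}
    (hγ0 : 0 ≤ γ) (hγ1 : γ ≤ 1) (s : S) : reachValue P z γ s ≤ 1 :=
  have : Nonempty A := ⟨z.2⟩
  ciSup_le fun q => pow_mul_hitProb_le_one hP z hγ0 hγ1 s q.1 q.2

theorem reachValue_le_mul (hP : ∀ s a, P s a ∈ stdSimplex ℝ S) (z : S × A) {γ : ℝ}
    (hγ0 : 0 ≤ γ) (hγ1 : γ ≤ 1) {s : S} (hs : s ≠ z.1) {c : ℝ}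
    (hc : ∀ a, ∑ s', P s a s' * reachValue P z γ s' ≤ c) : reachValue P z γ s ≤ γ * c := by
  have : Nonempty A := ⟨z.2⟩
  have hc0 : 0 ≤ c := (sum_nonneg fun s' _ =>
    mul_nonneg ((hP s z.2).1 s') (reachValue_nonneg hP z hγ0 hγ1 s')).trans (hc z.2)
  refine ciSup_le fun ⟨k, π⟩ => ?_
  cases k with
  | zero => simpa [hitProb] using mul_nonneg hγ0 hc0
  | succ k =>
    have hz : (s, π 0 s) ≠ z := fun h => hs (congrArg Prod.fst h)
    calc γ ^ (k + 1) * hitProb P z (k + 1) π s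
        = γ * ∑ s', P s (π 0 s) s' * (γ ^ k * hitProb P z k (fun h => π (h + 1)) s') := by
          rw [hitProb, if_neg hz, pow_succ', mul_assoc, mul_sum]
          simp only [mul_left_comm]
      _ ≤ γ * ∑ s', P s (π 0 s) s' * reachValue P z γ s' :=
          mul_le_mul_of_nonneg_left (sum_le_sum fun s' _ => mul_le_mul_of_nonneg_left
            (pow_mul_hitProb_le_reachValue hP z hγ0 hγ1 s' k _) ((hP _ _).1 s')) hγ0
      _ ≤ γ * c := mul_le_mul_of_nonneg_left (hc (π 0 s)) hγ0

-- `A` may be infinite, so no action need attain the supremum in the Bellman equation; the gap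
-- between `γ` and `δ` makes room for a near-optimal one.
theorem exists_action_reachValue_le (hP : ∀ s a, P s a ∈ stdSimplex ℝ S) (z : S × A) {γ δ : ℝ}
    (hγ : 0 ≤ γ) (hγδ : γ < δ) (hδ : δ ≤ 1) {s : S} (hs : s ≠ z.1) :
    ∃ a, reachValue P z γ s ≤ δ * ∑ s', P s a s' * reachValue P z γ s' := by
  by_contra! h
  have hδ0 : 0 < δ := hγ.trans_lt hγδ
  have hV := reachValue_nonneg hP z hγ (hγδ.le.trans hδ)
  have hpos : 0 < reachValue P z γ s := (mul_nonneg hδ0.le (sum_nonneg fun s' _ =>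
    mul_nonneg ((hP s z.2).1 s') (hV s'))).trans_lt (h z.2)
  have hle : reachValue P z γ s ≤ γ * (reachValue P z γ s / δ) :=
    reachValue_le_mul hP z hγ (hγδ.le.trans hδ) hs fun a => (le_div_iff₀' hδ0).2 (h a).le
  have hlt : γ * (reachValue P z γ s / δ) < δ * (reachValue P z γ s / δ) :=
    mul_lt_mul_of_pos_right hγδ (div_pos hpos hδ0)
  exact (hle.trans_lt hlt).ne (mul_div_cancel₀ _ hδ0.ne').symm

theorem exists_greedy_policy (hP : ∀ s a, P s a ∈ stdSimplex ℝ S) (z : S × A) {γ δ : ℝ}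
    (hγ : 0 ≤ γ) (hγδ : γ < δ) (hδ : δ ≤ 1) :
    ∃ π : S → A, π z.1 = z.2 ∧ ∀ s ≠ z.1,
      reachValue P z γ s ≤ δ * ∑ s', P s (π s) s' * reachValue P z γ s' := by
  have : Nonempty A := ⟨z.2⟩
  choose! π hπ using fun s (hs : s ≠ z.1) => exists_action_reachValue_le hP z hγ hγδ hδ hs
  refine ⟨Function.update π z.1 z.2, Function.update_self .., fun s hs => ?_⟩
  rw [Function.update_of_ne hs]
  exact hπ s hs

theorem exists_stationary_policy_one_sub_pow_mul_le (hP : ∀ s a, P s a ∈ stdSimplex ℝ S)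
    (z : S × A) {γ δ : ℝ} (hγ : 0 ≤ γ) (hγδ : γ < δ) (hδ : δ < 1) (m : ℕ) :
    ∃ π : S → A, ∀ (k : ℕ) (π' : ℕ → S → A) (s : S),
      (1 - δ ^ m) ^ Fintype.card S * (γ ^ k * hitProb P z k π' s) ≤
        hitProb P z (Fintype.card S * m) (fun _ => π) s := by
  have hδ0 : 0 ≤ δ := hγ.trans hγδ.le
  have hγ1 : γ ≤ 1 := (hγδ.trans hδ).le
  obtain ⟨π, hπz, hπ⟩ := exists_greedy_policy hP z hγ hγδ hδ.le
  have hsub : reachValue P z γ ≤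
      Pi.single z.1 1 + (δ • killedMatrix P π z.1) *ᵥ reachValue P z γ := by
    intro s
    obtain rfl | hs := eq_or_ne s z.1
    · simpa [killedMatrix, Matrix.smul_mulVec, Matrix.mulVec, dotProduct] using
        reachValue_le_one hP z hγ hγ1 z.1
    · simpa [killedMatrix, Matrix.smul_mulVec, Matrix.mulVec, dotProduct, hs] using hπ s hs
  refine ⟨π, fun k π' s => ?_⟩
  calc (1 - δ ^ m) ^ Fintype.card S * (γ ^ k * hitProb P z k π' s)
      ≤ (1 - δ ^ m) ^ Fintype.card S * reachValue P z γ s :=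
        mul_le_mul_of_nonneg_left (pow_mul_hitProb_le_reachValue hP z hγ hγ1 s k π')
          (pow_nonneg (sub_nonneg.2 (pow_le_one₀ hδ0 hδ.le)) _)
    _ ≤ (occupation (killedMatrix P π z.1) (Fintype.card S * m) *ᵥ Pi.single z.1 1) s :=
        one_sub_pow_mul_le_occupation_mulVec (killedMatrix_mem_rowSubstochastic hP π z.1) hδ0 hδ m
          (Pi.single_nonneg.2 zero_le_one) hsub s
    _ = hitProb P z (Fintype.card S * m) (fun _ => π) s := by
        rw [Matrix.mulVec_single_one, Matrix.col_apply, hitProb_stationary z hπz]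

theorem exists_le_half_and_le_four_mul {n H : ℕ} (hn : 1 ≤ n) (hH : 2 * n ≤ H) :
    ∃ m, m ≠ 0 ∧ n * m ≤ H / 2 ∧ H ≤ 4 * (n * m) := by
  have hpos : 0 < H / 2 / n := Nat.div_pos (by omega) hn
  have hmod : H / 2 % n < n := Nat.mod_lt _ hn
  have hdiv : n * (H / 2 / n) + H / 2 % n = H / 2 := Nat.div_add_mod _ _
  have hle : n * 1 ≤ n * (H / 2 / n) := Nat.mul_le_mul_left n hpos
  exact ⟨H / 2 / n, hpos.ne', by omega, by omega⟩

-- `512 = 2 * 4 ^ 4`: every state costs a factor `1 - δ ^ m = 1 / 2`, and as `H ≤ 4 * (n * m)` the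
-- discount `γ ^ H` is at least `(γ ^ m) ^ (4 * n) = (1 / 4) ^ (4 * n)`.
theorem exists_stationary_policy_hitProb_le (hP : ∀ s a, P s a ∈ stdSimplex ℝ S) (z : S × A)
    {H : ℕ} (hH : 2 * Fintype.card S ≤ H) :
    ∃ π : S → A, ∀ (π' : ℕ → S → A) (s : S),
      1 / 512 ^ Fintype.card S * hitProb P z H π' s ≤ hitProb P z (H / 2) (fun _ => π) s := by
  have hn : 1 ≤ Fintype.card S := Fintype.card_pos_iff.2 ⟨z.1⟩
  obtain ⟨m, hm, hmH, hHm⟩ := exists_le_half_and_le_four_mul hn hH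
  set n := Fintype.card S
  set γ : ℝ := (1 / 4) ^ (m⁻¹ : ℝ)
  set δ : ℝ := (1 / 2) ^ (m⁻¹ : ℝ)
  have hγm : γ ^ m = 1 / 4 := Real.rpow_inv_natCast_pow (by norm_num) hm
  have hδm : δ ^ m = 1 / 2 := Real.rpow_inv_natCast_pow (by norm_num) hm
  have hγ0 : 0 ≤ γ := by positivity
  have hδ0 : 0 ≤ δ := by positivity
  have hγδ : γ < δ := lt_of_pow_lt_pow_left₀ m hδ0 (by rw [hγm, hδm]; norm_num)
  have hδ1 : δ < 1 := (pow_lt_one_iff_of_nonneg hδ0 hm).1 (by rw [hδm]; norm_num)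
  obtain ⟨π, hπ⟩ := exists_stationary_policy_one_sub_pow_mul_le hP z hγ0 hγδ hδ1 m
  have hdiscount : 1 / 512 ^ n ≤ (1 - δ ^ m) ^ n * γ ^ H :=
    calc (1 / 512 ^ n : ℝ) = (1 - δ ^ m) ^ n * γ ^ (4 * (n * m)) := by
          rw [show 4 * (n * m) = m * 4 * n by ring, pow_mul γ, pow_mul γ, hγm, hδm, ← mul_pow,
            ← one_div_pow]
          norm_num
      _ ≤ (1 - δ ^ m) ^ n * γ ^ H := mul_le_mul_of_nonneg_left
          (pow_le_pow_of_le_one hγ0 (hγδ.trans hδ1).le hHm) (by rw [hδm]; positivity)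
  refine ⟨π, fun π' s => ?_⟩
  calc 1 / 512 ^ n * hitProb P z H π' s
      ≤ (1 - δ ^ m) ^ n * γ ^ H * hitProb P z H π' s := mul_le_mul_of_nonneg_right hdiscount
        (hitProb_nonneg (fun s a => (hP s a).1) z H π' s)
    _ = (1 - δ ^ m) ^ n * (γ ^ H * hitProb P z H π' s) := mul_assoc _ _ _
    _ ≤ hitProb P z (n * m) (fun _ => π) s := hπ H π' s
    _ ≤ hitProb P z (H / 2) (fun _ => π) s :=
        hitProb_mono (fun s a => (hP s a).1) z _ s hmH

end HittingProbability

theorem two_pow_mul_le_succ_pow_mul (c n : ℕ) : (2 : ℝ) ^ (c * n) ≤ (n + 1) ^ (c * (n + 1)) := by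
  obtain rfl | hn := n.eq_zero_or_pos
  · simp
  have hbase : (2 : ℝ) ≤ n + 1 := mod_cast Nat.succ_le_succ hn
  calc (2 : ℝ) ^ (c * n) ≤ 2 ^ (c * (n + 1)) :=
        pow_le_pow_right₀ one_le_two (Nat.mul_le_mul_left c n.le_succ)
    _ ≤ (n + 1) ^ (c * (n + 1)) := pow_le_pow_left₀ zero_le_two hbase _

theorem le_log_eight_mul_succ_pow (n : ℕ) :
    (n : ℝ) ≤ Real.log (8 * ((n : ℝ) + 1) ^ (4 * (n + 1))) := by
  rw [Real.le_log_iff_exp_le (by positivity), ← Real.exp_one_pow]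
  calc Real.exp 1 ^ n ≤ (2 ^ 4) ^ n :=
        pow_le_pow_left₀ (Real.exp_pos 1).le (by linarith [Real.exp_one_lt_three]) n
    _ = 2 ^ (4 * n) := (pow_mul _ _ _).symm
    _ ≤ ((n : ℝ) + 1) ^ (4 * (n + 1)) := two_pow_mul_le_succ_pow_mul 4 n
    _ ≤ 8 * ((n : ℝ) + 1) ^ (4 * (n + 1)) := le_mul_of_one_le_left (by positivity) (by norm_num)

theorem two_mul_le_of_two_mul_log_le {n H : ℕ}
    (hH : 2 * Real.log (8 * ((n : ℝ) + 1) ^ (4 * (n + 1))) ≤ H) : 2 * n ≤ H := by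
  exact_mod_cast (mul_le_mul_of_nonneg_left (le_log_eight_mul_succ_pow n) zero_le_two).trans hH

theorem one_div_mul_succ_pow_le_one_div_pow (n : ℕ) :
    1 / (512 * ((n : ℝ) + 1) ^ (12 * (n + 1))) ≤ 1 / 512 ^ n := by
  refine one_div_le_one_div_of_le (by positivity) ?_
  calc (512 : ℝ) ^ n = 2 ^ (9 * n) := by rw [pow_mul]; norm_num
    _ ≤ 2 ^ (12 * n) := pow_le_pow_right₀ one_le_two (by omega)
    _ ≤ ((n : ℝ) + 1) ^ (12 * (n + 1)) := two_pow_mul_le_succ_pow_mul 12 n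
    _ ≤ 512 * ((n : ℝ) + 1) ^ (12 * (n + 1)) :=
        le_mul_of_one_le_left (by positivity) (by norm_num)

theorem stmt7_general {S A : Type} [Fintype S] [DecidableEq S] [DecidableEq A]
    (μ : S → ℝ) (P : S → A → S → ℝ) (H : ℕ) (hμ0 : ∀ s, 0 ≤ μ s)
    (hP0 : ∀ s a s', 0 ≤ P s a s') (hP1 : ∀ s a, ∑ s', P s a s' = 1)
    (hH : 2 * Fintype.card S ≤ H) (z : S × A) :
    ∃ π : S → A, ∀ π' : ℕ → S → A,
      (1 / 512 ^ Fintype.card S) *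
          (∑ T : Fin (H + 1) → S,
            if 1 ≤ nVisits π' H z (extT H T) then trajP μ P π' H (extT H T) else 0) ≤
        ∑ T : Fin (H + 1) → S,
          if 1 ≤ nVisits (fun _ => π) (H / 2) z (extT H T) then
            trajP μ P (fun _ => π) H (extT H T) else 0 := by
  obtain ⟨π, hπ⟩ :=
    exists_stationary_policy_hitProb_le (fun s a => ⟨hP0 s a, hP1 s a⟩) z hH
  refine ⟨π, fun π' => ?_⟩
  rw [sum_trajP_of_one_le_nVisits μ hP1 z π' le_rfl,
    sum_trajP_of_one_le_nVisits μ hP1 z _ (H.div_le_self 2), mul_sum]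
  simp only [mul_left_comm (1 / 512 ^ Fintype.card S : ℝ)]
  exact sum_le_sum fun s _ => mul_le_mul_of_nonneg_left (hπ π' s) (hμ0 s)

theorem stmt7 {S A : Type} [Fintype S] [DecidableEq S] [DecidableEq A]
    (μ : S → ℝ) (P : S → A → S → ℝ) (H : ℕ)
    (hμ0 : ∀ s, 0 ≤ μ s) (hμ1 : ∑ s, μ s = 1)
    (hP0 : ∀ s a s', 0 ≤ P s a s') (hP1 : ∀ s a, ∑ s', P s a s' = 1)
    (hH : 2 * Real.log (8 * ((Fintype.card S : ℝ) + 1) ^ (4 * (Fintype.card S + 1))) ≤ (H : ℝ))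
    (z : S × A) :
    ∃ π : S → A, ∀ π' : ℕ → S → A,
      (1 / (512 * ((Fintype.card S : ℝ) + 1) ^ (12 * (Fintype.card S + 1)))) *
          (∑ T : Fin (H + 1) → S,
            if 1 ≤ nVisits π' H z (extT H T) then trajP μ P π' H (extT H T) else 0) ≤
        ∑ T : Fin (H + 1) → S,
          if 1 ≤ nVisits (fun _ => π) (H / 2) z (extT H T) then
            trajP μ P (fun _ => π) H (extT H T) else 0 := by
  obtain ⟨π, hπ⟩ := stmt7_general μ P H hμ0 hP0 hP1 (two_mul_le_of_two_mul_log_le hH) z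
  exact ⟨π, fun π' => (mul_le_mul_of_nonneg_right (one_div_mul_succ_pow_le_one_div_pow _)
    (sum_trajP_of_one_le_nVisits_nonneg hμ0 hP0 z π' H H)).trans (hπ π')⟩
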